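/- For p = 3, the number of primitive periodic orbits satisfies PO_3(n) = L_2(n) for all n ≠ 2 and PO_3(2) = L_2(2) + 1, where PO_3(n) is defined by Tr(A_V^n) = ∑_{d|n} d·PO_3(d) for the binary-graph adjacency matrix with V = 3·2^r, and L_2(n) is the number of binary Lyndon words of length n. Consequently C_3 = 1 + 2^{−2} = 5/4. -/

import Mathlib

open Matrix Finset

/-- A Lyndon word: a nonempty word strictly lexicographically smaller than
all of its nontrivial cyclic rotations. -/
def IsLyndon {α : Type*} [LinearOrder α] (w : List α) : Prop :=
  w ≠ [] ∧ ∀ i, 0 < i → i < w.length → w < w.rotate i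

/-- The number of binary Lyndon words of length `n`. -/
noncomputable def L2 (n : ℕ) : ℕ :=
  Nat.card {w : List Bool // w.length = n ∧ IsLyndon w}

/-- Adjacency matrix of the binary graph on `V` vertices. -/
def binAdj (V : ℕ) : Matrix (Fin V) (Fin V) ℕ := fun i j =>
  (if (2 * i.val) % V = j.val then 1 else 0) +
    (if (2 * i.val + 1) % V = j.val then 1 else 0)

/-!
A closed walk of length `n` starting at `i` is a digit block `k < 2 ^ n` with
`2 ^ n * i + k ≡ i [MOD V]`, that is `V ∣ N * i + k` for `N = 2 ^ n - 1`. The numbers `N * i + k`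
with `1 ≤ k ≤ N` run once through `1, …, N * V`, which contain `N` multiples of `V`, and `k = 0`
contributes the `gcd N V` points of period `n` of the doubling map modulo `V`. Hence the trace is
`N + gcd N V`, which for `V = 3 * 2 ^ r` is `2 ^ n`, plus `2` when `n` is even.

A periodic sequence of exact period `d` has exactly one shift whose length-`d` prefix is Lyndon, so
`∑ d ∣ n, d * L2 d = 2 ^ n`. The excess `2` at even `n` is the divisor sum of `d` supported at
`d = 2` (the cycle `(1 2)` of doubling modulo `3`), and divisor sums determine their summands.
-/

section PeriodicPoints

open Function

theorem exists_iterate_iterate_eq_self {X : Type*} {T : X → X} {x : X} (hx : x ∈ periodicPts T)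
    (i : ℕ) : ∃ j, T^[j] (T^[i] x) = x := by
  obtain ⟨p, hp, hper⟩ := hx
  refine ⟨i * (p - 1), ?_⟩
  rw [← iterate_add_apply, ← Nat.mul_succ, Nat.succ_eq_add_one, Nat.sub_add_cancel hp]
  exact hper.const_mul i

theorem ncard_ptsOfPeriod_eq_sum {X : Type*} {T : X → X} {n : ℕ} (hn : n ≠ 0)
    (hfin : (ptsOfPeriod T n).Finite) :
    (ptsOfPeriod T n).ncard = ∑ d ∈ n.divisors, {x | minimalPeriod T x = d}.ncard := by
  classical
  have hmaps : ∀ x ∈ hfin.toFinset, minimalPeriod T x ∈ n.divisors := fun x hx =>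
    Nat.mem_divisors.2 ⟨IsPeriodicPt.minimalPeriod_dvd (hfin.mem_toFinset.1 hx), hn⟩
  rw [Set.ncard_eq_toFinset_card _ hfin, Finset.card_eq_sum_card_fiberwise hmaps]
  refine Finset.sum_congr rfl fun d hd => ?_
  rw [← Set.ncard_coe_finset]
  congr 1
  ext x
  simp only [Finset.coe_filter, Set.Finite.mem_toFinset, Set.mem_ofPred_eq,
    and_iff_right_iff_imp]
  rintro rfl
  exact isPeriodicPt_iff_minimalPeriod_dvd.2 (Nat.dvd_of_mem_divisors hd)

variable {X L : Type*} [LinearOrder L] {T : X → X} {f : X → L} {n : ℕ} {x y : X}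

/-- The points of exact period `n` at which `f` is minimal along the orbit. When `f` is injective
on the points of exact period `n`, they form a system of representatives of the `n`-cycles. -/
def orbitMinimizers (T : X → X) (f : X → L) (n : ℕ) : Set X :=
  {x | minimalPeriod T x = n ∧ ∀ i, f x ≤ f (T^[i] x)}

theorem exists_iterate_mem_orbitMinimizers (hn : 0 < n) (hy : minimalPeriod T y = n) :
    ∃ j, T^[j] y ∈ orbitMinimizers T f n := by
  have hper : y ∈ periodicPts T := minimalPeriod_pos_iff_mem_periodicPts.1 (hy ▸ hn)
  obtain ⟨j, -, hmin⟩ := (Finset.range n).exists_min_image (fun j => f (T^[j] y))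
    (Finset.nonempty_range_iff.2 hn.ne')
  refine ⟨j, (minimalPeriod_apply_iterate hper j).trans hy, fun i => ?_⟩
  rw [← iterate_add_apply, ← iterate_mod_minimalPeriod_eq (n := i + j), hy]
  exact hmin _ (Finset.mem_range.2 (Nat.mod_lt _ hn))

theorem apply_le_apply_of_iterate_eq_iterate (hx : x ∈ orbitMinimizers T f n)
    (hy : y ∈ periodicPts T) {i j : ℕ} (h : T^[i] x = T^[j] y) : f x ≤ f y := by
  obtain ⟨k, hk⟩ := exists_iterate_iterate_eq_self hy j
  rw [← hk, ← h, ← iterate_add_apply]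
  exact hx.2 _

theorem bijOn_iterate_orbitMinimizers (hn : 0 < n)
    (hf : Set.InjOn f {x | minimalPeriod T x = n}) :
    Set.BijOn (fun q : ℕ × X => T^[q.1] q.2) (Set.Iio n ×ˢ orbitMinimizers T f n)
      {x | minimalPeriod T x = n} := by
  have periodic_of_eq {z : X} (hz : minimalPeriod T z = n) : z ∈ periodicPts T :=
    minimalPeriod_pos_iff_mem_periodicPts.1 (hz ▸ hn)
  refine ⟨?mapsTo, ?injOn, ?surjOn⟩
  case mapsTo =>
    rintro ⟨j, x⟩ ⟨-, hx⟩
    exact (minimalPeriod_apply_iterate (periodic_of_eq hx.1) j).trans hx.1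
  case injOn =>
    rintro ⟨i, x⟩ ⟨hi, hx⟩ ⟨j, y⟩ ⟨hj, hy⟩ (h : T^[i] x = T^[j] y)
    obtain rfl : x = y := hf hx.1 hy.1 <| le_antisymm
      (apply_le_apply_of_iterate_eq_iterate hx (periodic_of_eq hy.1) h)
      (apply_le_apply_of_iterate_eq_iterate hy (periodic_of_eq hx.1) h.symm)
    obtain rfl : i = j := iterate_injOn_Iio_minimalPeriod (hx.1.symm ▸ hi) (hx.1.symm ▸ hj) h
    rfl
  case surjOn =>
    intro y (hy : minimalPeriod T y = n)
    obtain ⟨j, hj⟩ := exists_iterate_mem_orbitMinimizers (f := f) hn hy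
    obtain ⟨k, hk⟩ := exists_iterate_iterate_eq_self (periodic_of_eq hy) j
    refine ⟨(k % n, T^[j] y), ⟨Nat.mod_lt _ hn, hj⟩, ?_⟩
    simpa only [← hj.1, iterate_mod_minimalPeriod_eq] using hk

theorem ncard_minimalPeriod_eq_mul (hn : 0 < n) (hf : Set.InjOn f {x | minimalPeriod T x = n}) :
    {x | minimalPeriod T x = n}.ncard = n * (orbitMinimizers T f n).ncard := by
  rw [← (bijOn_iterate_orbitMinimizers hn hf).ncard_eq, Set.ncard_prod, ← Finset.coe_Iio,
    Set.ncard_coe_finset, Nat.card_Iio]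

end PeriodicPoints

section LyndonWords

open Function Stream'

variable {α : Type*} {n : ℕ} {s : Stream' α}

theorem iterate_tail (i : ℕ) (s : Stream' α) : tail^[i] s = drop i s := by
  induction i generalizing s with
  | zero => rfl
  | succ i ih => rw [iterate_succ_apply, ih, drop_succ]

theorem isPeriodicPt_tail_iff : IsPeriodicPt tail n s ↔ drop n s = s := by
  rw [IsPeriodicPt, IsFixedPt, iterate_tail]

theorem rotate_take (hs : drop n s = s) {i : ℕ} (hi : i ≤ n) :
    (take n s).rotate i = take n (drop i s) := by
  obtain ⟨m, rfl⟩ := Nat.exists_eq_add_of_le hi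
  calc (take (i + m) s).rotate i
      = (take i s ++ take m (drop i s)).rotate (take i s).length := by rw [take_add, length_take]
    _ = take m (drop i s) ++ take i s := List.rotate_append_length_eq _ _
    _ = take m (drop i s) ++ take i (drop m (drop i s)) := by rw [drop_drop, hs]
    _ = take (i + m) (drop i s) := by rw [← take_add, add_comm]

theorem bijOn_take (hn : 0 < n) :
    Set.BijOn (take n) (ptsOfPeriod tail n) {w : List α | w.length = n} := by
  refine ⟨fun s _ => length_take n s, fun s hs t ht h => ?_, fun w hw => ?_⟩
  · have get_mod {u : Stream' α} (hu : u ∈ ptsOfPeriod tail n) (k : ℕ) :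
        u.get (k % n) = u.get k := by
      refine Periodic.map_mod_nat (f := u.get) (fun i => ?_) k
      rw [add_comm, ← get_drop, isPeriodicPt_tail_iff.1 hu]
    refine Stream'.ext fun k => ?_
    rw [← get_mod hs, ← get_mod ht, ← Option.some_inj, ← getElem?_take (Nat.mod_lt k hn),
      ← getElem?_take (Nat.mod_lt k hn), h]
  · obtain rfl : w.length = n := hw
    have hw := List.ne_nil_of_length_pos hn
    refine ⟨cycle w hw, isPeriodicPt_tail_iff.2 ?_, ?_⟩
    · conv_lhs => rw [cycle_eq, drop_append_stream]
    · rw [cycle_eq, take_append_of_le_length (h := le_rfl), List.take_length]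

theorem injOn_take_minimalPeriod (hn : 0 < n) :
    Set.InjOn (take n) {s : Stream' α | minimalPeriod tail s = n} :=
  (bijOn_take hn).injOn.mono fun s (hs : minimalPeriod tail s = n) =>
    hs ▸ isPeriodicPt_minimalPeriod tail s

variable [LinearOrder α]

theorem isLyndon_take_iff (hn : 0 < n) (hs : s ∈ ptsOfPeriod tail n) :
    IsLyndon (take n s) ↔ s ∈ orbitMinimizers tail (take n) n := by
  have rotate_eq {i : ℕ} (hi : i < n) : (take n s).rotate i = take n (tail^[i] s) := by
    rw [iterate_tail, rotate_take (isPeriodicPt_tail_iff.1 hs) hi.le]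
  rw [IsLyndon, length_take]
  constructor
  · rintro ⟨-, hlt⟩
    have hper : minimalPeriod tail s = n := by
      refine (IsPeriodicPt.minimalPeriod_le hn hs).antisymm (le_of_not_gt fun h => ?_)
      have := hlt _ (IsPeriodicPt.minimalPeriod_pos hn hs) h
      rw [rotate_eq h, iterate_minimalPeriod] at this
      exact this.false
    refine ⟨hper, fun i => ?_⟩
    rw [← iterate_mod_minimalPeriod_eq, hper]
    obtain h | h := (i % n).eq_zero_or_pos
    · rw [h, iterate_zero_apply]
    · exact rotate_eq (Nat.mod_lt i hn) ▸ (hlt _ h (Nat.mod_lt i hn)).le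
  · rintro ⟨hper, hle⟩
    refine ⟨List.ne_nil_of_length_pos (hn.trans_eq (length_take n s).symm), fun i hi hin => ?_⟩
    rw [rotate_eq hin]
    refine (hle i).lt_of_ne fun h => ?_
    have hs' : s = tail^[i] s := (bijOn_take hn).injOn hs (hs.apply_iterate i) h
    exact not_isPeriodicPt_of_pos_of_lt_minimalPeriod hi.ne' (hper ▸ hin) hs'.symm

theorem bijOn_take_isLyndon (hn : 0 < n) :
    Set.BijOn (take n) (orbitMinimizers tail (take n) n)
      {w : List α | w.length = n ∧ IsLyndon w} := by
  have hsub {s : Stream' α} (hs : s ∈ orbitMinimizers tail (take n) n) :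
      s ∈ ptsOfPeriod tail n := hs.1 ▸ isPeriodicPt_minimalPeriod tail s
  refine ⟨fun s hs => ⟨length_take n s, (isLyndon_take_iff hn (hsub hs)).2 hs⟩,
    (bijOn_take hn).injOn.mono fun s hs => hsub hs, ?_⟩
  rintro w ⟨hw, hlyn⟩
  obtain ⟨s, hs, rfl⟩ := (bijOn_take hn).surjOn hw
  exact ⟨s, (isLyndon_take_iff hn hs).1 hlyn, rfl⟩

theorem ncard_minimalPeriod_tail_eq_mul (hn : 0 < n) :
    {s : Stream' α | minimalPeriod tail s = n}.ncard =
      n * {w : List α | w.length = n ∧ IsLyndon w}.ncard := by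
  rw [ncard_minimalPeriod_eq_mul hn (injOn_take_minimalPeriod hn),
    (bijOn_take_isLyndon hn).ncard_eq]

theorem sum_divisors_mul_ncard_isLyndon [Fintype α] (hn : n ≠ 0) :
    ∑ d ∈ n.divisors, d * {w : List α | w.length = d ∧ IsLyndon w}.ncard =
      Fintype.card α ^ n := by
  have htake : Set.BijOn (take n) (ptsOfPeriod tail n) {w : List α | w.length = n} :=
    bijOn_take hn.pos
  have hfin : (ptsOfPeriod (tail : Stream' α → Stream' α) n).Finite :=
    Set.Finite.of_finite_image (htake.image_eq ▸ List.finite_length_eq α n) htake.injOn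
  calc ∑ d ∈ n.divisors, d * {w : List α | w.length = d ∧ IsLyndon w}.ncard
      = ∑ d ∈ n.divisors, {s : Stream' α | minimalPeriod tail s = d}.ncard :=
        Finset.sum_congr rfl fun d hd =>
          (ncard_minimalPeriod_tail_eq_mul (Nat.pos_of_mem_divisors hd)).symm
    _ = (ptsOfPeriod (tail : Stream' α → Stream' α) n).ncard :=
        (ncard_ptsOfPeriod_eq_sum hn hfin).symm
    _ = Nat.card (List.Vector α n) := htake.ncard_eq
    _ = Fintype.card α ^ n := by rw [Nat.card_eq_fintype_card, card_vector]

theorem sum_divisors_mul_L2 (hn : n ≠ 0) : ∑ d ∈ n.divisors, d * L2 d = 2 ^ n :=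
  sum_divisors_mul_ncard_isLyndon (α := Bool) hn

end LyndonWords

section Trace

theorem sum_range_mul {M : Type*} [AddCommMonoid M] (m n : ℕ) (f : ℕ → M) :
    ∑ k ∈ range (m * n), f k = ∑ i ∈ range m, ∑ j ∈ range n, f (n * i + j) := by
  induction m with
  | zero => simp
  | succ m ih => rw [Nat.succ_mul, sum_range_add, sum_range_succ, ih, mul_comm m n]

theorem card_filter_range_dvd_mul {V : ℕ} (hV : 0 < V) (a : ℕ) :
    #{i ∈ range V | V ∣ a * i} = a.gcd V := by
  set g := a.gcd V
  obtain ⟨e, he⟩ : g ∣ V := Nat.gcd_dvd_right a V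
  have hg : 0 < g := Nat.gcd_pos_of_pos_right a hV
  have he_pos : 0 < e := Nat.pos_of_mul_pos_left (he ▸ hV)
  have hdvd (i : ℕ) : V ∣ a * i ↔ i ≡ 0 [MOD e] := by
    have hgV : gcd V a = g := Nat.gcd_comm V a
    rw [← dvd_gcd_mul_iff_dvd_mul, hgV, he, Nat.mul_dvd_mul_iff_left hg,
      Nat.modEq_zero_iff_dvd]
  simp only [hdvd]
  rw [← Nat.count_eq_card_filter_range, Nat.count_modEq_card _ he_pos, he,
    Nat.mul_div_cancel _ he_pos, Nat.mul_mod_left]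
  simp

theorem sum_card_filter_dvd_mul_add {V : ℕ} (hV : 0 < V) (N : ℕ) :
    ∑ i ∈ range V, #{k ∈ range (N + 1) | V ∣ N * i + k} = N + N.gcd V := by
  have split (i : ℕ) : #{k ∈ range (N + 1) | V ∣ N * i + k} =
      #{k ∈ range N | V ∣ N * i + k + 1} + if V ∣ N * i then 1 else 0 := by
    simp only [card_filter, sum_range_succ', add_zero, add_assoc]
  -- The blocks `[N * i, N * (i + 1))`, `i < V`, tile `[0, N * V)`.
  have tile : ∑ i ∈ range V, #{k ∈ range N | V ∣ N * i + k + 1} = N := by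
    simp only [card_filter]
    rw [← sum_range_mul V N fun k => if V ∣ k + 1 then 1 else 0, ← card_filter,
      Nat.card_multiples, Nat.mul_div_cancel_left N hV]
  simp only [split]
  rw [sum_add_distrib, tile, ← card_filter, card_filter_range_dvd_mul hV]

theorem binAdj_mul_apply {V : ℕ} {κ : Type*} (M : Matrix (Fin V) κ ℕ) (i : Fin V) (j : κ) :
    (binAdj V * M) i j = M ⟨2 * i % V, Nat.mod_lt _ i.pos⟩ j +
      M ⟨(2 * i + 1) % V, Nat.mod_lt _ i.pos⟩ j := by
  have hsum (x : Fin V) : ∑ m, (if x.val = m.val then 1 else 0) * M m j = M x j := by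
    simp [Fin.val_inj]
  simp only [Matrix.mul_apply, binAdj, add_mul, Finset.sum_add_distrib]
  exact congrArg₂ _ (hsum ⟨2 * i % V, _⟩) (hsum ⟨(2 * i + 1) % V, _⟩)

theorem binAdj_pow_apply {V : ℕ} (n : ℕ) (i j : Fin V) :
    (binAdj V ^ n) i j = #{k ∈ range (2 ^ n) | 2 ^ n * i + k ≡ j [MOD V]} := by
  induction n generalizing i with
  | zero =>
    simp [Matrix.one_apply, card_filter, Nat.ModEq, Nat.mod_eq_of_lt, Fin.ext_iff,
      -sum_boole]
  | succ n ih =>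
    have reduce (x k : ℕ) : 2 ^ n * (x % V) + k ≡ j [MOD V] ↔ 2 ^ n * x + k ≡ j [MOD V] :=
      have h := ((Nat.mod_modEq x V).mul_left (2 ^ n)).add_right k
      ⟨h.symm.trans, h.trans⟩
    have regroup (e k : ℕ) : 2 ^ n * (2 * i + e) + k = 2 * 2 ^ n * i + (2 ^ n * e + k) := by ring
    rw [pow_succ', binAdj_mul_apply, pow_succ' 2]
    simp only [ih, reduce, card_filter, sum_range_mul, sum_range_succ (n := 1), sum_range_one,
      ← regroup, add_zero]

theorem trace_binAdj_pow {V : ℕ} (hV : 0 < V) (n : ℕ) :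
    trace (binAdj V ^ n) = 2 ^ n - 1 + (2 ^ n - 1).gcd V := by
  obtain ⟨N, hN⟩ : ∃ N, 2 ^ n = N + 1 := Nat.exists_eq_add_of_le' Nat.one_le_two_pow
  have closed_walk (i k : ℕ) : 2 ^ n * i + k ≡ i [MOD V] ↔ V ∣ N * i + k := by
    have h : 2 ^ n * i + k = N * i + k + i := by rw [hN]; ring
    rw [h, Nat.add_modEq_right_iff]
  simp only [trace, diag_apply, binAdj_pow_apply, closed_walk]
  rw [Fin.sum_univ_eq_sum_range fun i => #{k ∈ range (2 ^ n) | V ∣ N * i + k}, hN,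
    sum_card_filter_dvd_mul_add hV, Nat.add_sub_cancel]

theorem gcd_two_pow_sub_one_three (n : ℕ) :
    (2 ^ n - 1).gcd 3 = if 2 ∣ n then 3 else 1 := by
  rw [show 3 = 2 ^ 2 - 1 from rfl, Nat.pow_sub_one_gcd_pow_sub_one]
  split_ifs with h
  · rw [Nat.gcd_eq_right h]
  · rw [(Nat.coprime_two_right.2 (Nat.not_even_iff_odd.1 (even_iff_two_dvd.not.2 h))).gcd_eq_one]
    rfl

theorem trace_binAdj_three_mul_two_pow_pow (r : ℕ) {n : ℕ} (hn : n ≠ 0) :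
    trace (binAdj (3 * 2 ^ r) ^ n) = 2 ^ n + if 2 ∣ n then 2 else 0 := by
  have hcop : (2 ^ n - 1).Coprime (2 ^ r) := by
    refine Nat.Coprime.pow_right r (Nat.coprime_two_right.2 ?_)
    exact Nat.Even.sub_odd Nat.one_le_two_pow (even_two.pow_of_ne_zero hn) odd_one
  have hpos := Nat.one_le_two_pow (n := n)
  rw [trace_binAdj_pow (by positivity), hcop.symm.gcd_mul_right_cancel_right,
    gcd_two_pow_sub_one_three]
  split_ifs <;> omega

end Trace

theorem eq_of_sum_divisors_eq {M : Type*} [AddCancelCommMonoid M] {F G : ℕ → M}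
    (h : ∀ n ≠ 0, ∑ d ∈ n.divisors, F d = ∑ d ∈ n.divisors, G d) {n : ℕ} (hn : n ≠ 0) :
    F n = G n := by
  induction n using Nat.strong_induction_on with
  | _ n ih =>
    have hproper : ∑ d ∈ n.properDivisors, F d = ∑ d ∈ n.properDivisors, G d :=
      sum_congr rfl fun d hd =>
        ih d (Nat.mem_properDivisors.1 hd).2 (Nat.pos_of_mem_properDivisors hd).ne'
    have hn' := h n hn
    rw [← Nat.cons_self_properDivisors hn, sum_cons, sum_cons, hproper] at hn'
    exact add_right_cancel hn'

/-- For `p = 3`: if `PO` is defined by `Tr(A_V^n) = ∑_{d ∣ n} d·PO(d)` with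
`V = 3·2^r`, then `PO(n) = L₂(n)` for `n ≠ 2` and `PO(2) = L₂(2) + 1`;
consequently `C₃ = 1 + 2^{−2} = 5/4`. -/
theorem p_eq_three_orbit_count (r : ℕ) (PO : ℕ → ℕ)
    (hPO : ∀ n, 1 ≤ n →
      Matrix.trace ((binAdj (3 * 2 ^ r)) ^ n) = ∑ d ∈ n.divisors, d * PO d) :
    (∀ n, 1 ≤ n → n ≠ 2 → PO n = L2 n) ∧
      PO 2 = L2 2 + 1 ∧
      (1 + ((2 : ℚ) ^ 2)⁻¹ = 5 / 4) := by
  have sum_eq (m : ℕ) (hm : m ≠ 0) : ∑ d ∈ m.divisors, d * PO d =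
      ∑ d ∈ m.divisors, d * (L2 d + if d = 2 then 1 else 0) := by
    rw [← hPO m hm.pos, trace_binAdj_three_mul_two_pow_pow r hm]
    simp [mul_add, sum_add_distrib, sum_divisors_mul_L2 hm, hm]
  have PO_eq (n : ℕ) (hn : n ≠ 0) : PO n = L2 n + if n = 2 then 1 else 0 :=
    Nat.eq_of_mul_eq_mul_left hn.pos (eq_of_sum_divisors_eq sum_eq hn)
  refine ⟨fun n hn hn2 => ?_, PO_eq 2 two_ne_zero, by norm_num⟩
  rw [PO_eq n (Nat.one_le_iff_ne_zero.1 hn), if_neg hn2, add_zero]
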